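/- Let (Ω,F,P) be a probability space and let X, Y : Ω → ([0,1] → ℝ) be two random functions, measurable with respect to the product (cylinder) σ-algebra on the path space, such that for every ω both paths s ↦ X(ω,s) and s ↦ Y(ω,s) are right-continuous on [0,1) with left limits on (0,1]. Assume X and Y are independent, and that Y has no fixed discontinuities: for every s ∈ (0,1], for P-almost every ω, the left limit lim_{u↑s} Y(ω,u) equals Y(ω,s). Then for P-almost every ω, there is no s ∈ (0,1] at which both paths X(ω,·) and Y(ω,·) are discontinuous, i.e., almost surely Disc(X(ω,·)) ∩ Disc(Y(ω,·)) = ∅, where Disc(x) denotes the set of points s ∈ (0,1] with lim_{u↑s} x(u) ≠ x(s). -/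

import Mathlib

open MeasureTheory ProbabilityTheory Filter Set Topology

/-!
A right-continuous path has only countably many discontinuities. Conditionally on `X`, the
no-fixed-discontinuity assumption therefore makes `Y` almost surely continuous at every
discontinuity of `X`, and by independence Fubini's theorem concludes, provided the event in question
is measurable. To express it through countably many coordinates, note that on a compact set `K` two
functions have no common discontinuity iff, for every `ε > 0`, finitely many basic open sets cover
`K` so that on each of them one of the two functions varies by at most `ε`. There are only countably
many such covers, and the variation of a right-continuous path over an open set is determined by its
values on a countable set of times.
-/

open TopologicalSpace Metric
open scoped ENNReal

section Separable

variable {T E : Type*} [TopologicalSpace T]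

/-- Separability of a path in the sense of Doob, with separating set `D`: every value of `f` is a
cluster value of `f` along points of `D` converging to the argument. -/
def IsSeparableAlong [TopologicalSpace E] (D : Set T) (f : T → E) : Prop :=
  ∀ s, MapClusterPt (f s) (𝓝[D] s) f

theorem IsSeparableAlong.image_subset_closure [TopologicalSpace E] {D U : Set T} {f : T → E}
    (hf : IsSeparableAlong D f) (hU : IsOpen U) : f '' U ⊆ closure (f '' (U ∩ D)) := by
  rintro _ ⟨s, hs, rfl⟩
  have hUD : U ∩ D ∈ 𝓝[D] s := inter_mem (mem_nhdsWithin_of_mem_nhds (hU.mem_nhds hs))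
    self_mem_nhdsWithin
  exact (hf s).clusterPt.mem_closure_of_mem _ (image_mem_map hUD)

theorem IsSeparableAlong.ediam_image_inter [PseudoEMetricSpace E] {D U : Set T} {f : T → E}
    (hf : IsSeparableAlong D f) (hU : IsOpen U) : ediam (f '' (U ∩ D)) = ediam (f '' U) :=
  (ediam_mono (image_mono inter_subset_left)).antisymm <|
    (ediam_mono (hf.image_subset_closure hU)).trans_eq (ediam_closure _)

theorem isSeparableAlong_of_continuousWithinAt_Ioi [LinearOrder T] [OrderTopology T]
    [TopologicalSpace E] {D : Set T} (hdense : Dense D) (hisolated : {s | 𝓝[>] s = ⊥} ⊆ D)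
    {f : T → E} (hf : ∀ s, ContinuousWithinAt f (Ioi s) s) : IsSeparableAlong D f := by
  intro s
  by_cases hs : 𝓝[>] s = ⊥
  · have hpure : pure s ≤ 𝓝[D] s := pure_le_nhdsWithin (hisolated hs)
    exact (tendsto_pure_nhds f s).mapClusterPt.mono hpure
  · have hclosure : s ∈ closure (Ioi s ∩ D) :=
      closure_minimal (hdense.open_subset_closure_inter isOpen_Ioi) isClosed_closure
        (mem_closure_iff_nhdsWithin_neBot.2 ⟨hs⟩)
    have : (𝓝[Ioi s ∩ D] s).NeBot := mem_closure_iff_nhdsWithin_neBot.1 hclosure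
    exact ((hf s).mono inter_subset_left).mapClusterPt.mono (nhdsWithin_mono s inter_subset_right)

end Separable

section Oscillation

variable {T E : Type*} [TopologicalSpace T] [PseudoEMetricSpace E] {f : T → E} {s : T} {ε : ℝ≥0∞}

theorem oscillation_le_ediam_image {U : Set T} (hU : U ∈ 𝓝 s) :
    oscillation f s ≤ ediam (f '' U) :=
  biInf_le _ (image_mem_map hU)

theorem exists_mem_countableBasis_ediam_image_le [SecondCountableTopology T]
    (hf : ContinuousAt f s) (hε : ε ≠ 0) :
    ∃ U ∈ countableBasis T, s ∈ U ∧ ediam (f '' U) ≤ ε := by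
  have hosc : oscillation f s < ε := hf.oscillation_eq_zero.trans_lt (pos_iff_ne_zero.2 hε)
  obtain ⟨S, hS, hSε⟩ := by simpa only [oscillation, iInf_lt_iff] using hosc
  obtain ⟨U, hU, hsU, hUS⟩ := (isBasis_countableBasis T).mem_nhds_iff.1 (mem_map.1 hS)
  exact ⟨U, hU, hsU, (ediam_mono (image_subset_iff.2 hUS)).trans hSε.le⟩

theorem eventually_oscillation_le_of_tendsto_nhdsWithin {A : Set T} {l : E} (hA : IsOpen A)
    (hf : Tendsto f (𝓝[A] s) (𝓝 l)) (hε : ε ≠ 0) : ∀ᶠ t in 𝓝[A] s, oscillation f t ≤ ε := by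
  have hball : ∀ᶠ t in 𝓝[A] s, f t ∈ eball l (ε / 2) :=
    hf (eball_mem_nhds l (ENNReal.half_pos hε))
  filter_upwards [eventually_eventually_nhdsWithin.2 hball, self_mem_nhdsWithin] with t ht htA
  rw [hA.nhdsWithin_eq htA] at ht
  calc oscillation f t ≤ ediam (f '' (f ⁻¹' eball l (ε / 2))) := oscillation_le_ediam_image ht
    _ ≤ ediam (eball l (ε / 2)) := ediam_mono (image_preimage_subset _ _)
    _ ≤ 2 * (ε / 2) := ediam_eball_le
    _ = ε := ENNReal.mul_div_cancel two_ne_zero ENNReal.ofNat_ne_top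

variable [LinearOrder T] [OrderTopology T] [SecondCountableTopology T]

theorem countable_lt_oscillation (hf : ∀ s, ∃ l, Tendsto f (𝓝[>] s) (𝓝 l)) (hε : ε ≠ 0) :
    {s | ε < oscillation f s}.Countable := by
  let A : Set T := {s | ε < oscillation f s}
  have hisolated : A ⊆ {s ∈ A | 𝓝[A ∩ Ioi s] s = ⊥} := by
    intro s hs
    obtain ⟨l, hl⟩ := hf s
    refine ⟨hs, ?_⟩
    rw [inter_comm, nhdsWithin_inter', ← disjoint_iff, disjoint_principal_right]
    filter_upwards [eventually_oscillation_le_of_tendsto_nhdsWithin isOpen_Ioi hl hε] with t ht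
    exact ht.not_gt
  exact countable_setOfPred_isolated_right_within.mono hisolated

theorem countable_not_continuousAt_of_tendsto_nhdsGT (hf : ∀ s, ∃ l, Tendsto f (𝓝[>] s) (𝓝 l)) :
    {s | ¬ ContinuousAt f s}.Countable := by
  have hlevel (n : ℕ) : {s | (n : ℝ≥0∞)⁻¹ < oscillation f s}.Countable :=
    countable_lt_oscillation hf (by simp)
  refine (countable_iUnion hlevel).mono fun s hs ↦ mem_iUnion.2 ?_
  exact ENNReal.exists_inv_nat_lt fun h ↦ hs ((Oscillation.eq_zero_iff_continuousAt f s).1 h)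

end Oscillation

section FinelyCoveredPairs

variable {T E F : Type*} [TopologicalSpace T] [SecondCountableTopology T] [PseudoEMetricSpace E]
  [PseudoEMetricSpace F] {D K : Set T} {ε : ℝ≥0∞} {f : T → E} {g : T → F}

variable (E F) in
/-- The pairs `(f, g)` for which finitely many basic open sets cover `K` so that on each of them `f`
or `g` varies by at most `ε`. Only the values on `D` are looked at, so that for countable `D` this
is a set in the product σ-algebra. -/
def finelyCoveredPairs (D K : Set T) (ε : ℝ≥0∞) : Set ((T → E) × (T → F)) :=
  {p | ∃ 𝓤 : Set (Set T), (𝓤.Finite ∧ 𝓤 ⊆ countableBasis T) ∧ K ⊆ ⋃₀ 𝓤 ∧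
    ∀ U ∈ 𝓤, ediam (p.1 '' (U ∩ D)) ≤ ε ∨ ediam (p.2 '' (U ∩ D)) ≤ ε}

theorem mem_finelyCoveredPairs_of_continuousAt (hK : IsCompact K) (hε : ε ≠ 0)
    (h : ∀ s ∈ K, ContinuousAt f s ∨ ContinuousAt g s) : (f, g) ∈ finelyCoveredPairs E F D K ε := by
  let small : Set (Set T) :=
    {U ∈ countableBasis T | ediam (f '' (U ∩ D)) ≤ ε ∨ ediam (g '' (U ∩ D)) ≤ ε}
  have hcover : K ⊆ ⋃ U ∈ small, U := by
    intro s hs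
    rcases h s hs with hf | hg
    · obtain ⟨U, hU, hsU, hUε⟩ := exists_mem_countableBasis_ediam_image_le hf hε
      exact mem_biUnion ⟨hU, .inl ((ediam_mono (image_mono inter_subset_left)).trans hUε)⟩ hsU
    · obtain ⟨U, hU, hsU, hUε⟩ := exists_mem_countableBasis_ediam_image_le hg hε
      exact mem_biUnion ⟨hU, .inr ((ediam_mono (image_mono inter_subset_left)).trans hUε)⟩ hsU
  obtain ⟨𝓤, h𝓤, hfinite, hK𝓤⟩ :=
    hK.elim_finite_subcover_image (fun U hU ↦ isOpen_of_mem_countableBasis hU.1) hcover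
  exact ⟨𝓤, ⟨hfinite, fun U hU ↦ (h𝓤 hU).1⟩, sUnion_eq_biUnion ▸ hK𝓤, fun U hU ↦ (h𝓤 hU).2⟩

theorem oscillation_le_or_of_mem_finelyCoveredPairs (hf : IsSeparableAlong D f)
    (hg : IsSeparableAlong D g) (h : (f, g) ∈ finelyCoveredPairs E F D K ε) {s : T} (hs : s ∈ K) :
    oscillation f s ≤ ε ∨ oscillation g s ≤ ε := by
  obtain ⟨𝓤, ⟨-, h𝓤⟩, hK, hsmall⟩ := h
  obtain ⟨U, hU, hsU⟩ := hK hs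
  have hUopen : IsOpen U := isOpen_of_mem_countableBasis (h𝓤 hU)
  have hUs : U ∈ 𝓝 s := hUopen.mem_nhds hsU
  refine (hsmall U hU).imp (fun hUε ↦ ?_) (fun hUε ↦ ?_)
  · exact (oscillation_le_ediam_image hUs).trans (hf.ediam_image_inter hUopen ▸ hUε)
  · exact (oscillation_le_ediam_image hUs).trans (hg.ediam_image_inter hUopen ▸ hUε)

theorem continuousAt_or_of_forall_mem_finelyCoveredPairs (hf : IsSeparableAlong D f)
    (hg : IsSeparableAlong D g) (h : ∀ n : ℕ, (f, g) ∈ finelyCoveredPairs E F D K (n : ℝ≥0∞)⁻¹)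
    {s : T} (hs : s ∈ K) : ContinuousAt f s ∨ ContinuousAt g s := by
  simp only [← Oscillation.eq_zero_iff_continuousAt]
  by_contra! hne
  have hmin : 0 < min (oscillation f s) (oscillation g s) :=
    lt_min (pos_iff_ne_zero.2 hne.1) (pos_iff_ne_zero.2 hne.2)
  obtain ⟨n, hn⟩ := ENNReal.exists_inv_nat_lt hmin.ne'
  exact hn.not_ge (min_le_iff.2 (oscillation_le_or_of_mem_finelyCoveredPairs hf hg (h n) hs))

theorem measurableSet_ediam_image_le [MeasurableSpace E] [OpensMeasurableSpace E]
    [SecondCountableTopology E] {ι : Type*} {A : Set ι} (hA : A.Countable) (ε : ℝ≥0∞) :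
    MeasurableSet {f : ι → E | ediam (f '' A) ≤ ε} := by
  simp only [ediam_image_le_iff, ofPred_forall]
  refine .biInter hA fun u _ ↦ .biInter hA fun v _ ↦ measurableSet_le ?_ measurable_const
  exact (measurable_pi_apply u).edist (measurable_pi_apply v)

variable [MeasurableSpace E] [OpensMeasurableSpace E] [SecondCountableTopology E]
  [MeasurableSpace F] [OpensMeasurableSpace F] [SecondCountableTopology F]

theorem measurableSet_finelyCoveredPairs (hD : D.Countable) :
    MeasurableSet (finelyCoveredPairs E F D K ε) := by
  have hsmall (U : Set T) : MeasurableSet {p : (T → E) × (T → F) |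
      ediam (p.1 '' (U ∩ D)) ≤ ε ∨ ediam (p.2 '' (U ∩ D)) ≤ ε} :=
    have hUD : (U ∩ D).Countable := hD.mono inter_subset_right
    (measurable_fst (measurableSet_ediam_image_le hUD ε)).union
      (measurable_snd (measurableSet_ediam_image_le hUD ε))
  have hunion : finelyCoveredPairs E F D K ε =
      ⋃ 𝓤 ∈ {𝓤 : Set (Set T) | 𝓤.Finite ∧ 𝓤 ⊆ countableBasis T}, {_p | K ⊆ ⋃₀ 𝓤} ∩
        ⋂ U ∈ 𝓤, {p | ediam (p.1 '' (U ∩ D)) ≤ ε ∨ ediam (p.2 '' (U ∩ D)) ≤ ε} := by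
    ext p
    simp only [finelyCoveredPairs, mem_iUnion, exists_prop, mem_inter_iff, mem_iInter,
      mem_ofPred_eq]
  rw [hunion]
  exact .biUnion (countable_ofPred_finite_subset (countable_countableBasis T)) fun 𝓤 h𝓤 ↦
    (MeasurableSet.const _).inter (.biInter h𝓤.1.countable fun U _ ↦ hsmall U)

end FinelyCoveredPairs

section Independent

variable {Ω : Type*} [MeasurableSpace Ω] {P : Measure Ω} [IsFiniteMeasure P]

theorem ae_prodMk_mem_of_indepFun {α β : Type*} [MeasurableSpace α] [MeasurableSpace β]
    {X : Ω → α} {Y : Ω → β} (hX : AEMeasurable X P) (hY : AEMeasurable Y P) (hXY : IndepFun X Y P)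
    {S : Set (α × β)} (hS : MeasurableSet S) (h : ∀ᵐ ω ∂P, ∀ᵐ ω' ∂P, (X ω, Y ω') ∈ S) :
    ∀ᵐ ω ∂P, (X ω, Y ω) ∈ S := by
  have hsection : MeasurableSet {x | ∀ᵐ y ∂P.map Y, (x, y) ∈ S} :=
    measurable_measure_prodMk_left hS.compl (measurableSet_singleton 0)
  refine ae_of_ae_map (hX.prodMk hY) (p := (· ∈ S)) ?_
  rw [hXY.map_prod_eq_prod_map_map hX hY, Measure.ae_prod_mem_iff_ae_ae_mem hS,
    ae_map_iff hX hsection]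
  filter_upwards [h] with ω hω
  exact (ae_map_iff hY (measurable_prodMk_left hS)).2 hω

variable {T E F : Type*} [TopologicalSpace T] [SecondCountableTopology T] [SigmaCompactSpace T]
  [PseudoEMetricSpace E] [SecondCountableTopology E] [MeasurableSpace E] [OpensMeasurableSpace E]
  [PseudoEMetricSpace F] [SecondCountableTopology F] [MeasurableSpace F] [OpensMeasurableSpace F]
  {X : Ω → T → E} {Y : Ω → T → F}

theorem ae_forall_continuousAt_or_of_isSeparableAlong {D : Set T} (hD : D.Countable)
    (hXmeas : AEMeasurable X P) (hYmeas : AEMeasurable Y P) (hindep : IndepFun X Y P)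
    (hXsep : ∀ᵐ ω ∂P, IsSeparableAlong D (X ω)) (hYsep : ∀ᵐ ω ∂P, IsSeparableAlong D (Y ω))
    (hXcount : ∀ᵐ ω ∂P, {s | ¬ ContinuousAt (X ω) s}.Countable)
    (hY_nofix : ∀ s, ∀ᵐ ω ∂P, ContinuousAt (Y ω) s) :
    ∀ᵐ ω ∂P, ∀ s, ContinuousAt (X ω) s ∨ ContinuousAt (Y ω) s := by
  have hsection : ∀ᵐ ω ∂P, ∀ᵐ ω' ∂P, ∀ s, ContinuousAt (X ω) s ∨ ContinuousAt (Y ω') s := by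
    filter_upwards [hXcount] with ω hω
    filter_upwards [(ae_ball_iff hω).2 fun s _ ↦ hY_nofix s] with ω' hω' s
    exact or_iff_not_imp_left.2 (hω' s)
  have hcovered (k n : ℕ) :
      ∀ᵐ ω ∂P, (X ω, Y ω) ∈ finelyCoveredPairs E F D (compactCovering T k) (n : ℝ≥0∞)⁻¹ := by
    refine ae_prodMk_mem_of_indepFun hXmeas hYmeas hindep (measurableSet_finelyCoveredPairs hD) ?_
    filter_upwards [hsection] with ω hω
    filter_upwards [hω] with ω' hω'
    exact mem_finelyCoveredPairs_of_continuousAt (isCompact_compactCovering T k) (by simp)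
      fun s _ ↦ hω' s
  filter_upwards [hXsep, hYsep, ae_all_iff.2 fun k ↦ ae_all_iff.2 (hcovered k)]
    with ω hX hY hXY s
  obtain ⟨k, hk⟩ := exists_mem_compactCovering s
  exact continuousAt_or_of_forall_mem_finelyCoveredPairs hX hY (hXY k) hk

theorem ae_forall_continuousAt_or_of_continuousWithinAt_Ioi [LinearOrder T] [OrderTopology T]
    (hXmeas : AEMeasurable X P) (hYmeas : AEMeasurable Y P) (hindep : IndepFun X Y P)
    (hX_right : ∀ᵐ ω ∂P, ∀ s, ContinuousWithinAt (X ω) (Ioi s) s)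
    (hY_right : ∀ᵐ ω ∂P, ∀ s, ContinuousWithinAt (Y ω) (Ioi s) s)
    (hY_nofix : ∀ s, ∀ᵐ ω ∂P, ContinuousWithinAt (Y ω) (Iio s) s) :
    ∀ᵐ ω ∂P, ∀ s, ContinuousAt (X ω) s ∨ ContinuousAt (Y ω) s := by
  obtain ⟨D₀, hD₀_countable, hD₀_dense⟩ := exists_countable_dense T
  let D : Set T := D₀ ∪ {s | 𝓝[>] s = ⊥}
  have hD_countable : D.Countable := hD₀_countable.union countable_setOfPred_isolated_right
  have hD_dense : Dense D := hD₀_dense.mono subset_union_left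
  refine ae_forall_continuousAt_or_of_isSeparableAlong hD_countable hXmeas hYmeas hindep
    ?_ ?_ ?_ fun s ↦ ?_
  · filter_upwards [hX_right] with ω hω
    exact isSeparableAlong_of_continuousWithinAt_Ioi hD_dense subset_union_right hω
  · filter_upwards [hY_right] with ω hω
    exact isSeparableAlong_of_continuousWithinAt_Ioi hD_dense subset_union_right hω
  · filter_upwards [hX_right] with ω hω
    exact countable_not_continuousAt_of_tendsto_nhdsGT fun s ↦ ⟨X ω s, hω s⟩
  · filter_upwards [hY_right, hY_nofix s] with ω hright hleft
    exact continuousAt_iff_continuous_left'_right'.2 ⟨hleft, hright s⟩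

end Independent

section Restrict

variable {α E : Type*} [TopologicalSpace α] [TopologicalSpace E] {f : α → E}

theorem continuousWithinAt_domRestrict_iff {K : Set α} {A : Set K} {s : K} :
    ContinuousWithinAt (K.domRestrict f) A s ↔ ContinuousWithinAt f (Subtype.val '' A) s := by
  rw [ContinuousWithinAt, ContinuousWithinAt, ← IsInducing.subtypeVal.map_nhdsWithin_eq,
    tendsto_map'_iff, domRestrict_eq, Function.comp_apply]

variable [LinearOrder α] {a b : α} {s : Icc a b}

theorem continuousWithinAt_domRestrict_Icc_Ioi_iff :
    ContinuousWithinAt ((Icc a b).domRestrict f) (Ioi s) s ↔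
      (s < b → ContinuousWithinAt f (Ioc s b) s) := by
  rw [continuousWithinAt_domRestrict_iff, image_subtype_val_Icc_Ioi]
  refine ⟨fun h _ ↦ h, fun h ↦ ?_⟩
  rcases s.2.2.lt_or_eq with hs | hs
  · exact h hs
  · simp [ContinuousWithinAt, hs]

theorem continuousWithinAt_domRestrict_Icc_Iio_iff :
    ContinuousWithinAt ((Icc a b).domRestrict f) (Iio s) s ↔
      (a < s → ContinuousWithinAt f (Ico a s) s) := by
  rw [continuousWithinAt_domRestrict_iff, image_subtype_val_Icc_Iio]
  refine ⟨fun h _ ↦ h, fun h ↦ ?_⟩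
  rcases s.2.1.lt_or_eq with hs | hs
  · exact h hs
  · simp [ContinuousWithinAt, ← hs]

end Restrict

theorem no_common_discontinuities_general {Ω α E F : Type*} [MeasurableSpace Ω] {P : Measure Ω}
    [IsFiniteMeasure P] [LinearOrder α] [TopologicalSpace α] [OrderTopology α]
    [CompactIccSpace α] [SecondCountableTopology α]
    [PseudoEMetricSpace E] [SecondCountableTopology E] [MeasurableSpace E] [OpensMeasurableSpace E]
    [PseudoEMetricSpace F] [SecondCountableTopology F] [MeasurableSpace F] [OpensMeasurableSpace F]
    {a b : α} {X : Ω → α → E} {Y : Ω → α → F}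
    (hXmeas : AEMeasurable X P) (hYmeas : AEMeasurable Y P) (hindep : IndepFun X Y P)
    (hX_right : ∀ᵐ ω ∂P, ∀ s ∈ Ico a b, ContinuousWithinAt (X ω) (Ioc s b) s)
    (hY_right : ∀ᵐ ω ∂P, ∀ s ∈ Ico a b, ContinuousWithinAt (Y ω) (Ioc s b) s)
    (hY_nofix : ∀ s ∈ Ioc a b, ∀ᵐ ω ∂P, ContinuousWithinAt (Y ω) (Ico a s) s) :
    ∀ᵐ ω ∂P, ∀ s ∈ Ioc a b,
      ContinuousWithinAt (X ω) (Ico a s) s ∨ ContinuousWithinAt (Y ω) (Ico a s) s := by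
  have hE : Measurable fun f : α → E ↦ (Icc a b).domRestrict f := by fun_prop
  have hF : Measurable fun f : α → F ↦ (Icc a b).domRestrict f := by fun_prop
  have hrestrict : ∀ᵐ ω ∂P, ∀ s : Icc a b,
      ContinuousAt ((Icc a b).domRestrict (X ω)) s ∨
        ContinuousAt ((Icc a b).domRestrict (Y ω)) s := by
    refine ae_forall_continuousAt_or_of_continuousWithinAt_Ioi (hE.comp_aemeasurable hXmeas)
      (hF.comp_aemeasurable hYmeas) (hindep.comp hE hF) ?_ ?_ fun s ↦ ?_
    · filter_upwards [hX_right] with ω hω s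
      exact continuousWithinAt_domRestrict_Icc_Ioi_iff.2 fun hs ↦ hω s ⟨s.2.1, hs⟩
    · filter_upwards [hY_right] with ω hω s
      exact continuousWithinAt_domRestrict_Icc_Ioi_iff.2 fun hs ↦ hω s ⟨s.2.1, hs⟩
    · simp only [continuousWithinAt_domRestrict_Icc_Iio_iff]
      exact eventually_imp_distrib_left.2 fun hs ↦ hY_nofix s ⟨hs, s.2.2⟩
  filter_upwards [hrestrict] with ω hω s hs
  lift s to Icc a b using Ioc_subset_Icc_self hs
  exact (hω s).imp
    (fun h ↦ continuousWithinAt_domRestrict_Icc_Iio_iff.1 h.continuousWithinAt hs.1)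
    (fun h ↦ continuousWithinAt_domRestrict_Icc_Iio_iff.1 h.continuousWithinAt hs.1)

/-- Let `X, Y` be independent random càdlàg paths on `[0,1]`
(measurable for the cylinder σ-algebra on path space), where `Y` has no fixed
discontinuities. Then almost surely the paths of `X` and `Y` have no common
discontinuity point in `(0,1]`: at every `s ∈ (0,1]`, at least one of the two paths
is left-continuous at `s`. -/
theorem no_common_discontinuities
    {Ω : Type*} [MeasurableSpace Ω] (P : Measure Ω) [IsProbabilityMeasure P]
    (X Y : Ω → ℝ → ℝ)
    (hXmeas : Measurable X) (hYmeas : Measurable Y)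
    (hX_right : ∀ ω, ∀ s ∈ Set.Ico (0:ℝ) 1,
      Tendsto (X ω) (nhdsWithin s (Set.Ioc s 1)) (nhds (X ω s)))
    (hX_left : ∀ ω, ∀ s ∈ Set.Ioc (0:ℝ) 1,
      ∃ L : ℝ, Tendsto (X ω) (nhdsWithin s (Set.Ico 0 s)) (nhds L))
    (hY_right : ∀ ω, ∀ s ∈ Set.Ico (0:ℝ) 1,
      Tendsto (Y ω) (nhdsWithin s (Set.Ioc s 1)) (nhds (Y ω s)))
    (hY_left : ∀ ω, ∀ s ∈ Set.Ioc (0:ℝ) 1,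
      ∃ L : ℝ, Tendsto (Y ω) (nhdsWithin s (Set.Ico 0 s)) (nhds L))
    (hindep : IndepFun X Y P)
    (hY_nofix : ∀ s ∈ Set.Ioc (0:ℝ) 1, ∀ᵐ ω ∂P,
      Tendsto (Y ω) (nhdsWithin s (Set.Ico 0 s)) (nhds (Y ω s))) :
    ∀ᵐ ω ∂P, ∀ s ∈ Set.Ioc (0:ℝ) 1,
      Tendsto (X ω) (nhdsWithin s (Set.Ico 0 s)) (nhds (X ω s)) ∨
      Tendsto (Y ω) (nhdsWithin s (Set.Ico 0 s)) (nhds (Y ω s)) := by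
  exact no_common_discontinuities_general hXmeas.aemeasurable hYmeas.aemeasurable hindep
    (ae_of_all P hX_right) (ae_of_all P hY_right) hY_nofix
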